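/- arXiv:1610.01329 — 2 statements merged into one kernel-verified Lean document; each statement's English description precedes it below -/
import Mathlib

section
/- Product formula θ_{1,1}(τ) = 2 q^{1/4} (q⁴;q⁴)_∞² / (q²;q²)_∞, where θ_{1,1}(τ) = Σ_{n∈ℤ} q^{(2n+1)²/4} and q = e^{2πiτ}. -/
open Complex

/-- The q-Pochhammer symbol `(a;q)_∞ = ∏_{n ≥ 1} (1 - a q^{n-1})`. -/
noncomputable def qPoch (a q : ℂ) : ℂ := ∏' n : ℕ, (1 - a * q ^ n)

/-- The Jacobi theta function `ϑ(z;τ) = ∑_{n ∈ 1/2 + ℤ} e^{πi n² τ + 2πi n (z + 1/2)}`. -/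
noncomputable def jTheta (z τ : ℂ) : ℂ :=
  ∑' n : ℤ, Complex.exp ((Real.pi : ℂ) * I * ((n : ℂ) + 1/2) ^ 2 * τ +
    2 * (Real.pi : ℂ) * I * ((n : ℂ) + 1/2) * (z + 1/2))

/-- `ϑ_{m,a}(z;τ) = ∑_{n ∈ ℤ} q^{(2mn+a)²/(4m)} ζ^{2mn+a}` with `q = e^{2πiτ}`, `ζ = e^{2πiz}`,
fractional powers interpreted via `q^x = e^{2πiτx}`, `ζ^x = e^{2πizx}`. -/
noncomputable def thetaMA (m a : ℝ) (z τ : ℂ) : ℂ :=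
  ∑' n : ℤ, Complex.exp (2 * (Real.pi : ℂ) * I * τ * ((2 * m * n + a) ^ 2 / (4 * m)) +
    2 * (Real.pi : ℂ) * I * z * (2 * m * n + a))

/-- The theta constant `θ_{m,a}(τ) = ϑ_{m,a}(0;τ)`. -/
noncomputable def thetaC (m a : ℝ) (τ : ℂ) : ℂ := thetaMA m a 0 τ

open Filter Topology Finset

/-- Finite product of `1 - x^(i+1)`. -/
noncomputable def gP (x : ℂ) (n : ℕ) : ℂ := ∏ i ∈ range n, (1 - x ^ (i + 1))

/-- Finite product of `1 + x^(i+1)`. -/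
noncomputable def gQ (x : ℂ) (n : ℕ) : ℂ := ∏ i ∈ range n, (1 + x ^ (i + 1))

/-- Terms of the finite q-binomial theorem. -/
noncomputable def gA (x y : ℂ) (N j : ℕ) : ℂ :=
  if j ≤ N then x ^ (j.choose 2) * (gP x N / (gP x j * gP x (N - j))) * y ^ (N - j) else 0

lemma gP_succ (x : ℂ) (n : ℕ) : gP x (n + 1) = gP x n * (1 - x ^ (n + 1)) := by
  simp [gP, prod_range_succ]

lemma g_one_sub_ne {x : ℂ} (hx : ‖x‖ < 1) (n : ℕ) : 1 - x ^ (n + 1) ≠ 0 := by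
  intro h
  have h1 : x ^ (n + 1) = 1 := (sub_eq_zero.mp h).symm
  have h2 : ‖x‖ ^ (n + 1) < 1 := pow_lt_one₀ (norm_nonneg _) hx (by omega)
  rw [← norm_pow, h1] at h2
  simp at h2

lemma gP_ne {x : ℂ} (hx : ‖x‖ < 1) (n : ℕ) : gP x n ≠ 0 :=
  prod_ne_zero_iff.mpr fun i _ => g_one_sub_ne hx i

lemma g_choose_succ (j : ℕ) : (j + 1).choose 2 = j.choose 2 + j := by
  rw [Nat.choose_succ_succ' j 1]; simp; omega

lemma g_two_choose (j : ℕ) : 2 * (j + 1).choose 2 = (j + 1) * j := by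
  induction j with
  | zero => simp
  | succ k ih => rw [g_choose_succ, mul_add, ih]; ring

lemma gA_zero {x : ℂ} (hx : ‖x‖ < 1) (y : ℂ) (N : ℕ) : gA x y (N + 1) 0 = y * gA x y N 0 := by
  have h1 := gP_ne hx N
  have h2 := gP_ne hx (N + 1)
  have h0 : gP x 0 = 1 := by simp [gP]
  simp only [gA, Nat.zero_le, if_true, h0, Nat.sub_zero, one_mul]
  rw [div_self h1, div_self h2]
  ring

lemma gA_succ {x : ℂ} (hx : ‖x‖ < 1) (y : ℂ) (N j : ℕ) :
    gA x y (N + 1) (j + 1) = y * gA x y N (j + 1) + x ^ N * gA x y N j := by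
  rcases lt_trichotomy j N with h | h | h
  · obtain ⟨m, rfl⟩ : ∃ m, N = j + 1 + m := ⟨N - j - 1, by omega⟩
    have e1 : j + 1 + m + 1 - (j + 1) = m + 1 := by omega
    have e2 : j + 1 + m - (j + 1) = m := by omega
    have e3 : j + 1 + m - j = m + 1 := by omega
    simp only [gA]
    rw [if_pos (by omega), if_pos (by omega), if_pos (by omega), e1, e2, e3, g_choose_succ,
      gP_succ x (j + 1 + m), gP_succ x j, gP_succ x m]
    have h1 := gP_ne hx j
    have h2 := gP_ne hx m
    have h3 := g_one_sub_ne hx j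
    have h4 := g_one_sub_ne hx m
    generalize gP x (j + 1 + m) = R
    generalize gP x j = A at *
    generalize gP x m = B at *
    field_simp
    ring
  · subst h
    have h0 : gP x 0 = 1 := by simp [gP]
    simp only [gA]
    rw [if_pos (by omega), if_neg (by omega), if_pos (by omega), g_choose_succ]
    simp only [Nat.sub_self, h0, mul_one, pow_zero]
    rw [div_self (gP_ne hx _), div_self (gP_ne hx _)]
    ring
  · simp only [gA]
    rw [if_neg (by omega), if_neg (by omega), if_neg (by omega)]
    simp

lemma g_qbinom {x : ℂ} (hx : ‖x‖ < 1) (y : ℂ) (N : ℕ) :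
    ∏ i ∈ range N, (y + x ^ i) = ∑ j ∈ range (N + 1), gA x y N j := by
  induction N with
  | zero => simp [gA, gP]
  | succ N ih =>
    have hz : gA x y N (N + 1) = 0 := by simp [gA]
    have h1 : ∑ j ∈ range (N + 1), gA x y N j =
        ∑ j ∈ range (N + 1), gA x y N (j + 1) + gA x y N 0 := by
      rw [← sum_range_succ', sum_range_succ _ (N + 1), hz, add_zero]
    rw [prod_range_succ, ih, sum_range_succ' _ (N + 1), gA_zero hx]
    simp_rw [gA_succ hx]
    rw [sum_add_distrib, ← mul_sum, ← mul_sum]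
    linear_combination y * h1

lemma g_prod_low (x : ℂ) (n : ℕ) :
    ∏ i ∈ range n, (x ^ n + x ^ i) = x ^ (n.choose 2) * gQ x n := by
  have h : ∏ i ∈ range n, (x ^ n + x ^ i) = ∏ i ∈ range n, (x ^ i * (1 + x ^ (n - i))) := by
    refine prod_congr rfl fun i hi => ?_
    have hi' := mem_range.mp hi
    rw [mul_add, ← pow_add, show i + (n - i) = n by omega]
    ring
  rw [h, prod_mul_distrib, prod_pow_eq_pow_sum, sum_range_id, ← Nat.choose_two_right, gQ,
    ← prod_range_reflect (fun i => 1 + x ^ (i + 1))]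
  congr 1
  refine prod_congr rfl fun i hi => ?_
  have hi' := mem_range.mp hi
  rw [show n - 1 - i + 1 = n - i by omega]

lemma g_prod_all (x : ℂ) (n : ℕ) :
    ∏ i ∈ range (2 * n + 1), (x ^ n + x ^ i) =
      x ^ (n ^ 2 + (n + 1).choose 2) * (2 * gQ x n ^ 2) := by
  rw [show 2 * n + 1 = n + (n + 1) by ring, prod_range_add, g_prod_low]
  have h : ∏ i ∈ range (n + 1), (x ^ n + x ^ (n + i)) = x ^ (n * (n + 1)) * (2 * gQ x n) := by
    have : ∀ i ∈ range (n + 1), x ^ n + x ^ (n + i) = x ^ n * (1 + x ^ i) := by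
      intro i _; ring
    rw [prod_congr rfl this, prod_mul_distrib, prod_const, card_range, ← pow_mul,
      prod_range_succ', gQ]
    ring
  rw [h, g_choose_succ]
  ring

/-- Coefficients of the finite Gauss identity. -/
noncomputable def gF (x : ℂ) (n k : ℕ) : ℂ :=
  if k ≤ n then gP x (2 * n + 1) / (gP x (n - k) * gP x (n + 1 + k)) * x ^ ((k + 1).choose 2)
  else 0

lemma gA_high {x : ℂ} (n k : ℕ) (hk : k ≤ n) :
    gA x (x ^ n) (2 * n + 1) (n + 1 + k) = x ^ (n ^ 2 + (n + 1).choose 2) * gF x n k := by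
  obtain ⟨m, rfl⟩ := Nat.exists_eq_add_of_le hk
  have e1 : 2 * (k + m) + 1 - (k + m + 1 + k) = m := by omega
  have e2 : k + m - k = m := by omega
  simp only [gA, gF]
  rw [if_pos (by omega), if_pos hk, e1, e2]
  have e3 : (k + m + 1 + k).choose 2 + (k + m) * m =
      (k + m) ^ 2 + (k + m + 1).choose 2 + (k + 1).choose 2 := by
    have a1 := g_two_choose (k + m + k)
    have a2 := g_two_choose (k + m)
    have a3 := g_two_choose k
    rw [show k + m + 1 + k = k + m + k + 1 by ring]
    nlinarith
  rw [← pow_mul]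
  have e4 : x ^ (k + m + 1 + k).choose 2 * x ^ ((k + m) * m) =
      x ^ ((k + m) ^ 2 + (k + m + 1).choose 2) * x ^ (k + 1).choose 2 := by
    rw [← pow_add, ← pow_add, e3]
  rw [mul_comm (gP x m)]
  linear_combination (gP x (2 * (k + m) + 1) / (gP x (k + m + 1 + k) * gP x m)) * e4

lemma gA_low {x : ℂ} (n k : ℕ) (hk : k ≤ n) :
    gA x (x ^ n) (2 * n + 1) (n - k) = x ^ (n ^ 2 + (n + 1).choose 2) * gF x n k := by
  obtain ⟨m, rfl⟩ := Nat.exists_eq_add_of_le hk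
  have e2 : k + m - k = m := by omega
  have e1 : 2 * (k + m) + 1 - m = k + m + 1 + k := by omega
  simp only [gA, gF]
  rw [e2, if_pos (by omega), if_pos hk, e1]
  have e3 : m.choose 2 + (k + m) * (k + m + 1 + k) =
      (k + m) ^ 2 + (k + m + 1).choose 2 + (k + 1).choose 2 := by
    have a1 := g_two_choose m
    rw [g_choose_succ] at a1
    have a2 := g_two_choose (k + m)
    have a3 := g_two_choose k
    nlinarith
  rw [← pow_mul]
  have e4 : x ^ m.choose 2 * x ^ ((k + m) * (k + m + 1 + k)) =
      x ^ ((k + m) ^ 2 + (k + m + 1).choose 2) * x ^ (k + 1).choose 2 := by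
    rw [← pow_add, ← pow_add, e3]
  linear_combination (gP x (2 * (k + m) + 1) / (gP x m * gP x (k + m + 1 + k))) * e4

lemma g_finite {x : ℂ} (hx : ‖x‖ < 1) (hx0 : x ≠ 0) (n : ℕ) :
    gQ x n ^ 2 = ∑ k ∈ range (n + 1), gF x n k := by
  have h := g_qbinom hx (x ^ n) (2 * n + 1)
  rw [g_prod_all, show 2 * n + 1 + 1 = (n + 1) + (n + 1) by ring, sum_range_add,
    ← sum_range_reflect (fun j => gA x (x ^ n) (2 * n + 1) j)] at h
  have h1 : ∀ k ∈ range (n + 1), gA x (x ^ n) (2 * n + 1) (n + 1 - 1 - k) =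
      x ^ (n ^ 2 + (n + 1).choose 2) * gF x n k := fun k hk => by
    have := mem_range.mp hk
    exact gA_low n k (by omega)
  have h2 : ∀ k ∈ range (n + 1), gA x (x ^ n) (2 * n + 1) (n + 1 + k) =
      x ^ (n ^ 2 + (n + 1).choose 2) * gF x n k := fun k hk => by
    have := mem_range.mp hk
    exact gA_high n k (by omega)
  rw [sum_congr rfl h1, sum_congr rfl h2, ← mul_sum, ← mul_add] at h
  have h3 := mul_left_cancel₀ (pow_ne_zero _ hx0) h
  linear_combination h3 / 2

lemma g_summ {x : ℂ} (hx : ‖x‖ < 1) : Summable fun n : ℕ => ‖x ^ (n + 1)‖ := by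
  simpa using (summable_nat_add_iff 1).mpr (summable_geometric_of_lt_one (norm_nonneg _) hx)

lemma g_multP {x : ℂ} (hx : ‖x‖ < 1) : Multipliable fun n : ℕ => 1 - x ^ (n + 1) := by
  apply multipliable_one_add_of_summable (f := fun n ↦ -x ^ (n + 1))
  simpa using g_summ hx

lemma g_multQ {x : ℂ} (hx : ‖x‖ < 1) : Multipliable fun n : ℕ => 1 + x ^ (n + 1) :=
  multipliable_one_add_of_summable (g_summ hx)

lemma g_P_ne {x : ℂ} (hx : ‖x‖ < 1) : ∏' n : ℕ, (1 - x ^ (n + 1)) ≠ 0 := by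
  refine tprod_one_add_ne_zero_of_summable (f := fun n ↦ -x ^ (n + 1)) ?_ ?_
  · intro i
    simpa [sub_eq_add_neg] using g_one_sub_ne hx i
  · simpa using g_summ hx

lemma g_tri_summ {x : ℂ} (hx : ‖x‖ < 1) : Summable fun k : ℕ => ‖x‖ ^ ((k + 1).choose 2) := by
  refine Summable.of_nonneg_of_le (fun _ => by positivity) (fun k => ?_)
    (summable_geometric_of_lt_one (norm_nonneg x) hx)
  refine pow_le_pow_of_le_one (norm_nonneg _) hx.le ?_
  rw [g_choose_succ]; omega

lemma g_gauss {x : ℂ} (hx : ‖x‖ < 1) (hx0 : x ≠ 0) :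
    (∏' n : ℕ, (1 + x ^ (n + 1))) ^ 2 * ∏' n : ℕ, (1 - x ^ (n + 1)) =
      ∑' k : ℕ, x ^ ((k + 1).choose 2) := by
  set P := ∏' n : ℕ, (1 - x ^ (n + 1)) with hP
  have hPne : P ≠ 0 := g_P_ne hx
  have tP : Tendsto (gP x) atTop (𝓝 P) := (g_multP hx).tendsto_prod_tprod_nat
  have tQ : Tendsto (gQ x) atTop (𝓝 (∏' n : ℕ, (1 + x ^ (n + 1)))) :=
    (g_multQ hx).tendsto_prod_tprod_nat
  have tI : Tendsto (fun n => (gP x n)⁻¹) atTop (𝓝 P⁻¹) := tP.inv₀ hPne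
  obtain ⟨A, hA⟩ := (Metric.isBounded_range_of_tendsto _ tP).exists_norm_le
  obtain ⟨B, hB⟩ := (Metric.isBounded_range_of_tendsto _ tI).exists_norm_le
  have hA' : ∀ n, ‖gP x n‖ ≤ A := fun n => hA _ ⟨n, rfl⟩
  have hB' : ∀ n, ‖(gP x n)⁻¹‖ ≤ B := fun n => hB _ ⟨n, rfl⟩
  have hA0 : 0 ≤ A := (norm_nonneg _).trans (hA' 0)
  have hB0 : 0 ≤ B := (norm_nonneg _).trans (hB' 0)
  have key : Tendsto (fun n => ∑' k, gF x n k) atTop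
      (𝓝 (∑' k : ℕ, P⁻¹ * x ^ ((k + 1).choose 2))) := by
    refine tendsto_tsum_of_dominated_convergence
      (bound := fun k => (A * (B * B)) * ‖x‖ ^ ((k + 1).choose 2))
      ((g_tri_summ hx).mul_left _) ?_ ?_
    · intro k
      have t1 : Tendsto (fun n => gP x (2 * n + 1)) atTop (𝓝 P) :=
        tP.comp (tendsto_atTop_mono (fun n => by simp only [id]; omega) tendsto_id)
      have t2 : Tendsto (fun n => (gP x (n - k))⁻¹) atTop (𝓝 P⁻¹) :=
        tI.comp (tendsto_sub_atTop_nat k)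
      have t3 : Tendsto (fun n => (gP x (n + 1 + k))⁻¹) atTop (𝓝 P⁻¹) :=
        tI.comp (tendsto_atTop_mono (fun n => by simp; omega) tendsto_id)
      have t4 := ((t1.mul (t2.mul t3)).mul_const (x ^ ((k + 1).choose 2)))
      rw [← mul_assoc P, mul_inv_cancel₀ hPne, one_mul] at t4
      refine t4.congr' ?_
      filter_upwards [eventually_ge_atTop k] with n hn
      rw [gF, if_pos hn, div_eq_mul_inv, mul_inv]
    · refine Eventually.of_forall fun n k => ?_
      rw [gF]
      split_ifs with h
      · rw [div_eq_mul_inv, mul_inv, norm_mul, norm_mul, norm_mul, norm_pow]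
        gcongr
        · exact hA' _
        · exact hB' _
        · exact hB' _
      · rw [norm_zero]; positivity
  have e : ∀ n, ∑' k, gF x n k = gQ x n ^ 2 := fun n => by
    rw [g_finite hx hx0, tsum_eq_sum]
    intro k hk
    rw [gF, if_neg]
    simpa using hk
  simp_rw [e] at key
  have := tendsto_nhds_unique (tQ.pow 2) key
  rw [this, tsum_mul_left]
  field_simp

lemma g_qPoch (x : ℂ) : qPoch x x = ∏' n : ℕ, (1 - x ^ (n + 1)) := by
  simp only [qPoch]
  congr 1
  ext n
  ring

lemma g_final {x : ℂ} (hx : ‖x‖ < 1) (hx0 : x ≠ 0) :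
    ∑' k : ℕ, x ^ ((k + 1).choose 2) = qPoch (x ^ 2) (x ^ 2) ^ 2 / qPoch x x := by
  rw [← g_gauss hx hx0, g_qPoch, g_qPoch]
  have h : ∏' n : ℕ, (1 - (x ^ 2) ^ (n + 1)) =
      (∏' n : ℕ, (1 - x ^ (n + 1))) * ∏' n : ℕ, (1 + x ^ (n + 1)) := by
    rw [← (g_multP hx).tprod_mul (g_multQ hx)]
    congr 1
    ext n
    ring
  have := g_P_ne hx
  rw [h]
  field_simp

/-- Product formula for `θ_{1,1}`. -/
theorem theta11_product (τ : ℂ) (hτ : 0 < τ.im)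
    (q : ℂ) (hq : q = Complex.exp (2 * (Real.pi : ℂ) * I * τ)) :
    thetaC 1 1 τ = 2 * Complex.exp (2 * (Real.pi : ℂ) * I * τ * (1/4)) *
      qPoch (q ^ 4) (q ^ 4) ^ 2 / qPoch (q ^ 2) (q ^ 2) := by
  have hq0 : q ≠ 0 := hq ▸ Complex.exp_ne_zero _
  have hq1 : ‖q‖ < 1 := by
    rw [hq, Complex.norm_exp]
    simp
    positivity
  have hx : ‖q ^ 2‖ < 1 := by
    rw [norm_pow]; exact pow_lt_one₀ (norm_nonneg _) hq1 (by norm_num)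
  have hx0 : q ^ 2 ≠ 0 := pow_ne_zero _ hq0
  have hfin := g_final hx hx0
  have hs : Summable fun k : ℕ => (q ^ 2) ^ ((k + 1).choose 2) :=
    Summable.of_norm (by simpa only [norm_pow] using g_tri_summ hx)
  set c := Complex.exp (2 * (Real.pi : ℂ) * I * τ * (1/4)) with hc
  have hterm : ∀ k : ℕ, c * (q ^ 2) ^ ((k + 1).choose 2) =
      Complex.exp (2 * (Real.pi : ℂ) * I * τ * ((2 * k + 1) ^ 2 / 4)) := by
    intro k
    rw [← pow_mul, g_two_choose, hq, ← Complex.exp_nat_mul, hc, ← Complex.exp_add]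
    congr 1
    push_cast
    ring
  have hS : HasSum (fun k : ℕ => c * (q ^ 2) ^ ((k + 1).choose 2))
      (c * (qPoch (q ^ 4) (q ^ 4) ^ 2 / qPoch (q ^ 2) (q ^ 2))) := by
    have := hs.hasSum.mul_left c
    rwa [hfin, ← pow_mul] at this
  have hZ : HasSum (fun n : ℤ => Complex.exp (2 * (Real.pi : ℂ) * I * τ * 
      ((2 * (1 : ℝ) * n + (1 : ℝ)) ^ 2 / (4 * (1 : ℝ))) +
      2 * (Real.pi : ℂ) * I * 0 * (2 * (1 : ℝ) * n + (1 : ℝ)))) _ :=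
    HasSum.of_nat_of_neg_add_one (m := c * (qPoch (q ^ 4) (q ^ 4) ^ 2 / qPoch (q ^ 2) (q ^ 2)))
      (m' := c * (qPoch (q ^ 4) (q ^ 4) ^ 2 / qPoch (q ^ 2) (q ^ 2)))
      (by
        convert hS using 2 with k
        rw [hterm]
        congr 1
        push_cast
        ring)
      (by
        convert hS using 2 with k
        rw [hterm]
        congr 1
        push_cast
        ring)
  rw [thetaC, thetaMA, hZ.tsum_eq]
  ring
end

section
/- Formula for CΦ₆: the generating function for 6-colored generalized Frobenius partitions satisfies CΦ₆(q) = q^{1/4} η(τ)^{-6} [ 6 θ_{1,1}(τ)² θ_{1,0}(τ) θ_{2,1}(3τ) θ_{2,1}(τ) + θ_{1,0}(τ)³ ( θ_{1,1}(6τ) θ_{1,1}(2τ) + θ_{1,0}(6τ) θ_{1,0}(2τ) ) ]. -/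
open Complex

namespace CPhiAux

/-- finite q-Pochhammer `(q;q)_n`. -/
noncomputable def P (q : ℂ) (n : ℕ) : ℂ := ∏ i ∈ Finset.range n, (1 - q * q ^ i)

/-- reciprocal of `(q;q)_m`, extended by zero to negative `m`. -/
noncomputable def R (q : ℂ) (m : ℤ) : ℂ := if m < 0 then 0 else (P q m.toNat)⁻¹

lemma hs_of {ι : Type*} {f g : ι → ℂ} {a b : ℂ} (h : HasSum g b) (h1 : ∀ i, f i = g i) (h2 : a = b) :
    HasSum f a := by
  have : f = g := funext h1
  rw [this, h2]; exact h

lemma hs_mul {ι κ : Type*} {f : ι → ℂ} {g : κ → ℂ} {a b : ℂ} (hf : HasSum f a) (hg : HasSum g b) :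
    HasSum (fun x : ι × κ => f x.1 * g x.2) (a * b) := by
  have h : Summable (fun x : ι × κ => f x.1 * g x.2) :=
    summable_mul_of_summable_norm hf.summable.norm hg.summable.norm
  exact hf.mul hg h

lemma one_sub_ne {q : ℂ} (hq : ‖q‖ < 1) (i : ℕ) : 1 - q * q ^ i ≠ 0 := by
  intro h
  have h1 : q ^ (i + 1) = 1 := by rw [pow_succ']; exact (sub_eq_zero.mp h).symm
  have h2 : ‖q‖ ^ (i + 1) = 1 := by rw [← norm_pow, h1, norm_one]
  have h3 : ‖q‖ ^ (i + 1) < 1 := pow_lt_one₀ (norm_nonneg _) hq (by omega)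
  linarith

lemma P_ne {q : ℂ} (hq : ‖q‖ < 1) (n : ℕ) : P q n ≠ 0 :=
  Finset.prod_ne_zero_iff.mpr fun i _ => one_sub_ne hq i

lemma R_rec {q : ℂ} (hq : ‖q‖ < 1) (m : ℤ) : R q (m - 1) = (1 - q ^ m) * R q m := by
  unfold R
  rcases lt_trichotomy m 0 with h | h | h
  · rw [if_pos h, if_pos (by omega)]; simp
  · subst h; simp
  · obtain ⟨n, rfl⟩ : ∃ n : ℕ, m = n + 1 := ⟨(m - 1).toNat, by omega⟩
    rw [if_neg (by omega), if_neg (by omega)]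
    have e1 : ((n : ℤ) + 1 - 1).toNat = n := by omega
    have e2 : ((n : ℤ) + 1).toNat = n + 1 := by omega
    rw [e1, e2]
    have e3 : q ^ ((n : ℤ) + 1) = q * q ^ n := by
      rw [show (n : ℤ) + 1 = ((n + 1 : ℕ) : ℤ) by push_cast; rfl, zpow_natCast, pow_succ']
    have e4 : P q (n + 1) = P q n * (1 - q * q ^ n) := by
      unfold P; rw [Finset.prod_range_succ]
    rw [e3, e4]
    have := one_sub_ne hq n
    have := P_ne hq n
    field_simp

lemma norm_q_lt {τ : ℂ} (hτ : 0 < τ.im) : ‖cexp (2 * (Real.pi : ℂ) * I * τ)‖ < 1 := by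
  rw [Complex.norm_exp, Real.exp_lt_one_iff]
  simp
  positivity

lemma zpow_q (τ : ℂ) (m : ℤ) :
    cexp (2 * (Real.pi : ℂ) * I * τ) ^ m = cexp (2 * (Real.pi : ℂ) * I * τ * m) := by
  rw [← Complex.exp_int_mul]; congr 1; ring

/-- general term -/
noncomputable def T (z τ : ℂ) (k : ℤ) : ℂ :=
  cexp (2 * (Real.pi : ℂ) * I * k * z + (Real.pi : ℂ) * I * τ * (k ^ 2 + k))

lemma summable_T {τ : ℂ} (hτ : 0 < τ.im) (z : ℂ) : Summable (T z τ) := by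
  have := (summable_jacobiTheta₂_term_iff (z + τ / 2) τ).mpr hτ
  refine this.congr fun k => ?_
  unfold jacobiTheta₂_term T
  congr 1; ring

lemma finite_jtp {τ : ℂ} (hτ : 0 < τ.im) (z : ℂ) (q ζ : ℂ)
    (hq : q = cexp (2 * (Real.pi : ℂ) * I * τ)) (hζ : ζ = cexp (2 * (Real.pi : ℂ) * I * z)) (n : ℕ) :
    HasSum (fun k : ℤ => P q (2 * n) * R q (n - k) * R q (n + k) * T z τ k)
      ((∏ i ∈ Finset.range n, (1 - -ζ * q * q ^ i)) *
        ∏ i ∈ Finset.range n, (1 - -ζ⁻¹ * q ^ i)) := by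
  have hq1 : ‖q‖ < 1 := hq ▸ norm_q_lt hτ
  have hq0 : q ≠ 0 := hq ▸ Complex.exp_ne_zero _
  have hζ0 : ζ ≠ 0 := hζ ▸ Complex.exp_ne_zero _
  induction n with
  | zero =>
    convert hasSum_single (0 : ℤ) ?_ using 1
    · simp [P, R, T]
    · intro k hk
      rcases lt_or_gt_of_ne hk with h | h
      · have : R q ((0 : ℕ) + k) = 0 := by unfold R; rw [if_pos (by omega)]
        rw [this]; ring
      · have : R q ((0 : ℕ) - k) = 0 := by unfold R; rw [if_pos (by omega)]
        rw [this]; ring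
  | succ n ih =>
    set S := ((∏ i ∈ Finset.range n, (1 - -ζ * q * q ^ i)) *
        ∏ i ∈ Finset.range n, (1 - -ζ⁻¹ * q ^ i)) with hS
    have h1 := (Equiv.subRight (1 : ℤ)).hasSum_iff.mpr ih
    have h2 := (Equiv.addRight (1 : ℤ)).hasSum_iff.mpr ih
    have h := ((ih.mul_left (1 + q ^ (2 * n + 1))).add (h1.mul_left (ζ * q ^ (n + 1)))).add
      (h2.mul_left (ζ⁻¹ * q ^ n))
    refine hs_of h (fun k => ?_) ?_
    · simp only [Function.comp, Equiv.subRight_apply, Equiv.coe_addRight]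
      have ha1 := R_rec hq1 (n - k + 1)
      have ha2 := R_rec hq1 (n - k)
      have hb1 := R_rec hq1 (n + k + 1)
      have hb2 := R_rec hq1 (n + k)
      rw [show (n : ℤ) - k + 1 - 1 = n - k by ring] at ha1
      rw [show (n : ℤ) + k + 1 - 1 = n + k by ring] at hb1
      have hP : P q (2 * (n + 1)) = P q (2 * n) * (1 - q ^ (2 * n + 1)) * (1 - q ^ (2 * n + 2)) := by
        unfold P
        rw [show 2 * (n + 1) = 2 * n + 1 + 1 by ring, Finset.prod_range_succ, Finset.prod_range_succ]
        ring
      have hT1 : ζ * q ^ (n + 1) * T z τ (k - 1) = q ^ ((n : ℤ) - k + 1) * T z τ k := by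
        rw [← zpow_natCast, hq, hζ, zpow_q, zpow_q, T, T, ← Complex.exp_add, ← Complex.exp_add,
          ← Complex.exp_add]
        congr 1; push_cast; ring
      have hT2 : ζ⁻¹ * q ^ n * T z τ (k + 1) = q ^ ((n : ℤ) + k + 1) * T z τ k := by
        rw [← zpow_natCast, hq, hζ, zpow_q, zpow_q, T, T, ← Complex.exp_neg, ← Complex.exp_add,
          ← Complex.exp_add, ← Complex.exp_add]
        congr 1; push_cast; ring
      have e1 : ((n + 1 : ℕ) : ℤ) - k = n - k + 1 := by push_cast; ring
      have e2 : ((n + 1 : ℕ) : ℤ) + k = n + k + 1 := by push_cast; ring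
      have e3 : (n : ℤ) - (k - 1) = n - k + 1 := by ring
      have e4 : (n : ℤ) + (k - 1) = n + k - 1 := by ring
      have e5 : (n : ℤ) - (k + 1) = n - k - 1 := by ring
      have e6 : (n : ℤ) + (k + 1) = n + k + 1 := by ring
      rw [e1, e2, e3, e4, e5, e6, hP, hb2, ha2, ha1, hb1]
      have hu : q ^ ((n : ℤ) - k + 1) = q * q ^ ((n : ℤ) - k) := by
        rw [zpow_add_one₀ hq0]; ring
      have hv : q ^ ((n : ℤ) + k + 1) = q * q ^ ((n : ℤ) + k) := by
        rw [zpow_add_one₀ hq0]; ring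
      have huv : q ^ (2 * n + 1) = q * q ^ ((n : ℤ) - k) * q ^ ((n : ℤ) + k) := by
        rw [mul_assoc, ← zpow_add₀ hq0, show (n : ℤ) - k + (n + k) = ((2 * n : ℕ) : ℤ) by push_cast; ring,
          zpow_natCast]; ring
      have huv2 : q ^ (2 * n + 2) = q * q ^ (2 * n + 1) := by ring
      rw [huv2, huv]
      rw [hu] at hT1 ⊢
      rw [hv] at hT2 ⊢
      generalize q ^ ((n : ℤ) - k) = u at *
      generalize q ^ ((n : ℤ) + k) = v at *
      generalize R q ((n : ℤ) - k + 1) = x at *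
      generalize R q ((n : ℤ) + k + 1) = y at *
      linear_combination (-P q (2 * n) * x * y * (1 - v) * (1 - q * v)) * hT1 +
        (-P q (2 * n) * x * y * (1 - u) * (1 - q * u)) * hT2
    · rw [Finset.prod_range_succ, Finset.prod_range_succ]
      rw [show ∀ a b c d : ℂ, a * b * (c * d) = (a * c) * (b * d) by intros; ring, ← hS]
      field_simp
      ring

end CPhiAux

namespace CPhiAux
open Filter Topology

lemma mult_qPoch {q : ℂ} (hq : ‖q‖ < 1) (a : ℂ) : Multipliable (fun n : ℕ => 1 - a * q ^ n) := by
  have hs : Summable (fun n : ℕ => ‖-(a * q ^ n)‖) := by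
    simp only [norm_neg, norm_mul, norm_pow]
    exact (summable_geometric_of_lt_one (norm_nonneg _) hq).mul_left _
  simpa only [sub_eq_add_neg] using multipliable_one_add_of_summable hs

lemma qPoch_tendsto {q : ℂ} (hq : ‖q‖ < 1) (a : ℂ) :
    Tendsto (fun n => ∏ i ∈ Finset.range n, (1 - a * q ^ i)) atTop (𝓝 (qPoch a q)) :=
  (mult_qPoch hq a).hasProd.tendsto_prod_nat

lemma qPoch_ne {q : ℂ} (hq : ‖q‖ < 1) : qPoch q q ≠ 0 := by
  have hs : Summable (fun n : ℕ => ‖-(q * q ^ n)‖) := by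
    simp only [norm_neg, norm_mul, norm_pow]
    exact (summable_geometric_of_lt_one (norm_nonneg _) hq).mul_left _
  have := tprod_one_add_ne_zero_of_summable (f := fun n : ℕ => -(q * q ^ n))
    (fun i => by rw [← sub_eq_add_neg]; exact one_sub_ne hq i) hs
  simpa only [qPoch, sub_eq_add_neg] using this

lemma P_tendsto {q : ℂ} (hq : ‖q‖ < 1) : Tendsto (P q) atTop (𝓝 (qPoch q q)) :=
  qPoch_tendsto hq q

lemma P_bdd {q : ℂ} (hq : ‖q‖ < 1) : ∃ C : ℝ, 0 ≤ C ∧ ∀ n, ‖P q n‖ ≤ C := by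
  obtain ⟨C, hC⟩ := (P_tendsto hq).norm.bddAbove_range
  have h : ∀ n, ‖P q n‖ ≤ C := fun n => hC ⟨n, rfl⟩
  exact ⟨C, (norm_nonneg _).trans (h 0), h⟩

lemma R_bdd {q : ℂ} (hq : ‖q‖ < 1) : ∃ C : ℝ, 0 ≤ C ∧ ∀ n, ‖R q n‖ ≤ C := by
  obtain ⟨C, hC⟩ := ((P_tendsto hq).inv₀ (qPoch_ne hq)).norm.bddAbove_range
  have h : ∀ n, ‖(P q n)⁻¹‖ ≤ C := fun n => hC ⟨n, rfl⟩
  have hC0 := (norm_nonneg _).trans (h 0)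
  refine ⟨C, hC0, fun n => ?_⟩
  unfold R
  split_ifs
  · simpa using hC0
  · exact h _

lemma R_tendsto {q : ℂ} (hq : ‖q‖ < 1) : Tendsto (R q) atTop (𝓝 (qPoch q q)⁻¹) := by
  have h1 : Tendsto (fun m : ℤ => (P q m.toNat)⁻¹) atTop (𝓝 (qPoch q q)⁻¹) := by
    refine ((P_tendsto hq).inv₀ (qPoch_ne hq)).comp ?_
    refine tendsto_atTop_atTop.mpr fun b => ⟨b, fun a ha => by omega⟩
  refine h1.congr' ?_
  filter_upwards [eventually_ge_atTop (0 : ℤ)] with m hm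
  unfold R
  rw [if_neg (by omega)]

lemma jtp {τ : ℂ} (hτ : 0 < τ.im) (z : ℂ) (q ζ : ℂ)
    (hq : q = cexp (2 * (Real.pi : ℂ) * I * τ)) (hζ : ζ = cexp (2 * (Real.pi : ℂ) * I * z)) :
    qPoch (-ζ * q) q * qPoch (-ζ⁻¹) q = (qPoch q q)⁻¹ * ∑' k, T z τ k := by
  have hq1 : ‖q‖ < 1 := hq ▸ norm_q_lt hτ
  have hne := qPoch_ne hq1
  have hL := (qPoch_tendsto hq1 (-ζ * q)).mul (qPoch_tendsto hq1 (-ζ⁻¹))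
  obtain ⟨C, hC0, hC⟩ := P_bdd hq1
  obtain ⟨D, hD0, hD⟩ := R_bdd hq1
  have hR : Tendsto (fun n : ℕ => ∑' k : ℤ, P q (2 * n) * R q (n - k) * R q (n + k) * T z τ k) atTop
      (𝓝 (∑' k : ℤ, (qPoch q q)⁻¹ * T z τ k)) := by
    refine tendsto_tsum_of_dominated_convergence (bound := fun k => C * D * D * ‖T z τ k‖)
      ((summable_T hτ z).norm.mul_left _) (fun k => ?_) (Eventually.of_forall fun n k => ?_)
    · refine Tendsto.mul_const _ ?_
      have h1 : Tendsto (fun n : ℕ => P q (2 * n)) atTop (𝓝 (qPoch q q)) :=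
        (P_tendsto hq1).comp (tendsto_atTop_atTop.mpr fun b => ⟨b, fun a ha => by omega⟩)
      have h2 : Tendsto (fun n : ℕ => R q (n - k)) atTop (𝓝 (qPoch q q)⁻¹) :=
        (R_tendsto hq1).comp (tendsto_atTop_atTop.mpr fun b => ⟨(b + k).toNat, fun a ha => by omega⟩)
      have h3 : Tendsto (fun n : ℕ => R q (n + k)) atTop (𝓝 (qPoch q q)⁻¹) :=
        (R_tendsto hq1).comp (tendsto_atTop_atTop.mpr fun b => ⟨(b - k).toNat, fun a ha => by omega⟩)
      have := (h1.mul h2).mul h3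
      rwa [mul_inv_cancel₀ hne, one_mul] at this
    · rw [norm_mul, norm_mul, norm_mul]
      gcongr
      · exact hC _
      · exact hD _
      · exact hD _
  rw [← tsum_mul_left]
  refine tendsto_nhds_unique hL (hR.congr fun n => ?_)
  exact (finite_jtp hτ z q ζ hq hζ n).tsum_eq

/-- Terms of the one-variable theta constants. -/
lemma hasSum_theta (m a : ℝ) (hm : 0 < m) {τ : ℂ} (hτ : 0 < τ.im) :
    HasSum (fun n : ℤ => cexp (2 * (Real.pi : ℂ) * I * τ * ((2 * m * n + a) ^ 2 / (4 * m))))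
      (thetaC m a τ) := by
  have h0 : 0 < ((2 * m : ℝ) * τ).im := by
    rw [Complex.im_ofReal_mul]
    positivity
  have hm' : (m : ℂ) ≠ 0 := by exact_mod_cast hm.ne'
  have h := ((summable_jacobiTheta₂_term_iff (a * τ) ((2 * m : ℝ) * τ)).mpr (by simpa using h0)).mul_left
    (cexp (2 * (Real.pi : ℂ) * I * τ * (a ^ 2 / (4 * m))))
  have h2 : Summable (fun n : ℤ => cexp (2 * (Real.pi : ℂ) * I * τ * ((2 * m * n + a) ^ 2 / (4 * m)))) := by
    refine h.congr fun n => ?_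
    unfold jacobiTheta₂_term
    rw [← Complex.exp_add]
    congr 1
    push_cast
    field_simp
    ring
  convert h2.hasSum using 1
  unfold thetaC thetaMA
  simp

/-- Weighted coefficients of the square of the theta function. -/
noncomputable def W (τ : ℂ) (a : ℤ) : ℂ :=
  cexp (2 * (Real.pi : ℂ) * I * τ * ((a : ℂ) ^ 2 / 4 + a / 2)) *
    (if a % 2 = 0 then thetaC 1 0 τ else thetaC 1 1 τ)

lemma summable_W {τ : ℂ} (hτ : 0 < τ.im) : Summable (fun a => ‖W τ a‖) := by
  have h0 : 0 < (τ / 2).im := by simpa using hτ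
  have h := ((summable_jacobiTheta₂_term_iff (τ / 2) (τ / 2)).mpr h0).norm.mul_right
    (‖thetaC 1 0 τ‖ + ‖thetaC 1 1 τ‖)
  refine h.of_nonneg_of_le (fun _ => norm_nonneg _) (fun a => ?_)
  unfold W
  rw [norm_mul]
  refine mul_le_mul (le_of_eq ?_) ?_ (norm_nonneg _) (norm_nonneg _)
  · unfold jacobiTheta₂_term
    congr 2
    ring
  · split_ifs
    · exact le_add_of_nonneg_right (norm_nonneg _)
    · exact le_add_of_nonneg_left (norm_nonneg _)

lemma theta_sq {τ : ℂ} (hτ : 0 < τ.im) (z : ℂ) :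
    HasSum (fun a : ℤ => W τ a * cexp (2 * (Real.pi : ℂ) * I * a * z)) ((∑' k, T z τ k) ^ 2) := by
  have hs := summable_T hτ z
  have h1 := hs.hasSum.mul hs.hasSum (summable_mul_of_summable_norm hs.norm hs.norm)
  rw [← sq] at h1
  let e : ℤ × ℤ ≃ ℤ × ℤ :=
    { toFun := fun p => (p.2, p.1 - p.2)
      invFun := fun p => (p.1 + p.2, p.1)
      left_inv := fun p => by ext <;> simp
      right_inv := fun p => by ext <;> simp }
  have h2 := e.hasSum_iff.mpr h1
  refine h2.prod_fiberwise fun a => ?_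
  simp only [Function.comp, e, Equiv.coe_fn_mk]
  unfold W T
  rcases Int.emod_two_eq_zero_or_one a with ha | ha
  · obtain ⟨b, rfl⟩ : ∃ b, a = 2 * b := ⟨a / 2, by omega⟩
    rw [if_pos ha]
    have h3 := (Equiv.subRight b).hasSum_iff.mpr (hasSum_theta 1 0 one_pos hτ)
    refine hs_of (h3.mul_left (cexp (2 * (Real.pi : ℂ) * I * τ * (((2 * b : ℤ) : ℂ) ^ 2 / 4 + (2 * b : ℤ) / 2)) *
      cexp (2 * (Real.pi : ℂ) * I * (2 * b : ℤ) * z))) (fun k => ?_) (by ring)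
    simp only [Function.comp, Equiv.subRight_apply]
    rw [← Complex.exp_add, ← Complex.exp_add, ← Complex.exp_add]
    congr 1; push_cast; ring
  · obtain ⟨b, rfl⟩ : ∃ b, a = 2 * b + 1 := ⟨a / 2, by omega⟩
    rw [if_neg (by omega)]
    have h3 := (Equiv.subRight (b + 1)).hasSum_iff.mpr (hasSum_theta 1 1 one_pos hτ)
    refine hs_of (h3.mul_left (cexp (2 * (Real.pi : ℂ) * I * τ * (((2 * b + 1 : ℤ) : ℂ) ^ 2 / 4 + (2 * b + 1 : ℤ) / 2)) *
      cexp (2 * (Real.pi : ℂ) * I * (2 * b + 1 : ℤ) * z))) (fun k => ?_) (by ring)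
    simp only [Function.comp, Equiv.subRight_apply]
    rw [← Complex.exp_add, ← Complex.exp_add, ← Complex.exp_add]
    congr 1; push_cast; ring

lemma integral_e (n : ℤ) :
    (∫ t in (0:ℝ)..1, cexp (2 * (Real.pi : ℂ) * I * n * t)) = if n = 0 then 1 else 0 := by
  split_ifs with h
  · subst h; simp
  · have hc : 2 * (Real.pi : ℂ) * I * n ≠ 0 := by
      have : (n : ℂ) ≠ 0 := by exact_mod_cast h
      have := Complex.two_pi_I_ne_zero
      positivity
    rw [integral_exp_mul_complex hc]
    have : cexp (2 * (Real.pi : ℂ) * I * n * (1 : ℝ)) = 1 := by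
      rw [← Complex.exp_int_mul_two_pi_mul_I n]; congr 1; push_cast; ring
    rw [this]; simp

lemma ct {F : ℤ → ℂ} (hF : Summable (fun a => ‖F a‖)) (G : ℝ → ℂ)
    (hG : ∀ t : ℝ, HasSum (fun a : ℤ => F a * cexp (2 * (Real.pi : ℂ) * I * a * t)) (G t)) (S : ℂ)
    (hS : HasSum (fun p : ℤ × ℤ => F p.1 * F p.2 * F (-p.1 - p.2)) S) :
    (∫ t in (0:ℝ)..1, G t ^ 3) = S := by
  have hne : ∀ (a : ℤ) (t : ℝ), ‖cexp (2 * (Real.pi : ℂ) * I * a * t)‖ = 1 := by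
    intro a t
    rw [Complex.norm_exp]; simp
  have hb : Summable (fun p : ℤ × ℤ × ℤ => ‖F p.1‖ * (‖F p.2.1‖ * ‖F p.2.2‖)) := by
    have h2 := hF.mul_of_nonneg hF (fun _ => norm_nonneg _) (fun _ => norm_nonneg _)
    exact hF.mul_of_nonneg h2 (fun _ => norm_nonneg _) (fun _ => by positivity)
  have hl : ∀ t : ℝ, HasSum (fun p : ℤ × ℤ × ℤ => F p.1 * F p.2.1 * F p.2.2 *
      cexp (2 * (Real.pi : ℂ) * I * (p.1 + p.2.1 + p.2.2 : ℤ) * t)) (G t ^ 3) := by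
    intro t
    have hg := hG t
    have h3 := hs_mul hg (hs_mul hg hg)
    refine hs_of h3 (fun p => ?_) (by ring)
    push_cast
    rw [show 2 * (Real.pi : ℂ) * I * (p.1 + p.2.1 + p.2.2) * t = 2 * (Real.pi : ℂ) * I * p.1 * t +
      (2 * (Real.pi : ℂ) * I * p.2.1 * t + 2 * (Real.pi : ℂ) * I * p.2.2 * t) by ring,
      Complex.exp_add, Complex.exp_add]
    ring
  have hbd : ∀ (p : ℤ × ℤ × ℤ) (t : ℝ), ‖F p.1 * F p.2.1 * F p.2.2 *
      cexp (2 * (Real.pi : ℂ) * I * (p.1 + p.2.1 + p.2.2 : ℤ) * t)‖ ≤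
        ‖F p.1‖ * (‖F p.2.1‖ * ‖F p.2.2‖) := by
    intro p t
    rw [norm_mul, hne, norm_mul, norm_mul, mul_one, mul_assoc]
  have hcont : ∀ (p : ℤ × ℤ × ℤ), Continuous (fun t : ℝ => F p.1 * F p.2.1 * F p.2.2 *
      cexp (2 * (Real.pi : ℂ) * I * (p.1 + p.2.1 + p.2.2 : ℤ) * t)) := by
    intro p
    refine continuous_const.mul (Complex.continuous_exp.comp ?_)
    exact continuous_const.mul Complex.continuous_ofReal
  have h : HasSum (fun p : ℤ × ℤ × ℤ => ∫ t in (0:ℝ)..1, F p.1 * F p.2.1 * F p.2.2 *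
      cexp (2 * (Real.pi : ℂ) * I * (p.1 + p.2.1 + p.2.2 : ℤ) * t)) (∫ t in (0:ℝ)..1, G t ^ 3) := by
    refine intervalIntegral.hasSum_integral_of_dominated_convergence
      (fun p _ => ‖F p.1‖ * (‖F p.2.1‖ * ‖F p.2.2‖)) ?_ ?_ ?_ ?_ ?_
    · exact fun p => (hcont p).aestronglyMeasurable
    · exact fun p => Eventually.of_forall fun t _ => hbd p t
    · exact Eventually.of_forall fun t _ => hb
    · exact intervalIntegrable_const
    · exact Eventually.of_forall fun t _ => hl t
  simp only [intervalIntegral.integral_const_mul, integral_e] at h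
  refine h.unique ?_
  have hi : Function.Injective (fun p : ℤ × ℤ => ((p.1, p.2, -p.1 - p.2) : ℤ × ℤ × ℤ)) := by
    rintro ⟨a, b⟩ ⟨c, d⟩ h
    simp only [Prod.mk.injEq] at h ⊢
    exact ⟨h.1, h.2.1⟩
  refine (hi.hasSum_iff ?_).mp (hs_of hS (fun p => ?_) rfl)
  · rintro ⟨a, b, c⟩ hx
    rw [if_neg, mul_zero]
    intro h0
    refine hx ⟨(a, b), ?_⟩
    simp only [Prod.mk.injEq, true_and] at h0 ⊢
    omega
  · simp only [Function.comp]
    rw [if_pos (by ring), mul_one]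

end CPhiAux

namespace CPhiAux

lemma leaf (f : ℤ × ℤ → ℂ) (c : ℤ × ℤ → Prop) [DecidablePred c] (φ : ℤ × ℤ → ℤ × ℤ)
    (hinj : Function.Injective φ) (hc : ∀ x, c (φ x)) (hsurj : ∀ p, c p → ∃ x, φ x = p) (s : ℂ)
    (h : HasSum (fun x => f (φ x)) s) : HasSum (fun p => if c p then f p else 0) s := by
  refine (hinj.hasSum_iff ?_).mp (hs_of h (fun p => ?_) rfl)
  · intro p hp
    rw [if_neg]
    exact fun h => hp (hsurj p h)
  · simp only [Function.comp]
    rw [if_pos (hc p)]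

/-- parity-dependent theta constant -/
noncomputable def X (τ : ℂ) (a : ℤ) : ℂ := if a % 2 = 0 then thetaC 1 0 τ else thetaC 1 1 τ

lemma X_even {τ : ℂ} {a : ℤ} (h : a % 2 = 0) : X τ a = thetaC 1 0 τ := if_pos h
lemma X_odd {τ : ℂ} {a : ℤ} (h : a % 2 = 1) : X τ a = thetaC 1 1 τ := if_neg (by omega)

/-- lattice summand -/
noncomputable def f6 (τ : ℂ) (p : ℤ × ℤ) : ℂ :=
  cexp (2 * (Real.pi : ℂ) * I * τ * (((p.1 : ℂ) ^ 2 + p.1 * p.2 + (p.2 : ℂ) ^ 2) / 2)) *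
    (X τ p.1 * X τ p.2 * X τ (p.1 + p.2))

lemma prod_theta (m a M A : ℝ) (hm : 0 < m) (hM : 0 < M) {τ σ : ℂ} (hτ : 0 < τ.im) (hσ : 0 < σ.im)
    (c : ℂ) :
    HasSum (fun p : ℤ × ℤ => cexp (2 * (Real.pi : ℂ) * I * σ * ((2 * M * p.1 + A) ^ 2 / (4 * M)) +
       2 * (Real.pi : ℂ) * I * τ * ((2 * m * p.2 + a) ^ 2 / (4 * m))) * c)
      (thetaC M A σ * thetaC m a τ * c) := by
  have h1 := hasSum_theta m a hm hτ
  have h2 := hasSum_theta M A hM hσ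
  have h := hs_mul h2 h1
  refine hs_of (h.mul_right c) (fun p => ?_) rfl
  rw [Complex.exp_add]

lemma lattice {τ : ℂ} (hτ : 0 < τ.im) :
    HasSum (f6 τ)
      (6 * thetaC 1 1 τ ^ 2 * thetaC 1 0 τ * thetaC 2 1 (3 * τ) * thetaC 2 1 τ +
          thetaC 1 0 τ ^ 3 *
            (thetaC 1 1 (6 * τ) * thetaC 1 1 (2 * τ) + thetaC 1 0 (6 * τ) * thetaC 1 0 (2 * τ))) := by
  have hk : ∀ k : ℝ, 0 < k → 0 < ((k : ℂ) * τ).im := by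
    intro k hk
    rw [Complex.im_ofReal_mul]
    positivity
  have h3 : 0 < (3 * τ).im := by simpa using hk 3 (by norm_num)
  have h6 : 0 < (6 * τ).im := by simpa using hk 6 (by norm_num)
  have h2 : 0 < (2 * τ).im := by simpa using hk 2 (by norm_num)
  have s1 := prod_theta 1 0 1 0 one_pos one_pos h6 h2
    (thetaC 1 0 τ * thetaC 1 0 τ * thetaC 1 0 τ)
  have s2 := prod_theta 1 1 1 1 one_pos one_pos h6 h2
    (thetaC 1 0 τ * thetaC 1 0 τ * thetaC 1 0 τ)
  have s3 := prod_theta 2 1 2 1 two_pos two_pos h3 hτ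
    (thetaC 1 0 τ * thetaC 1 1 τ * thetaC 1 1 τ)
  have L1 := leaf (f6 τ) (fun p => p.1 % 2 = 0 ∧ p.2 % 4 = 0)
    (fun x => (2 * (x.1 - x.2), 4 * x.2))
    (by rintro ⟨a, b⟩ ⟨c, d⟩ h; simp only [Prod.mk.injEq] at h ⊢; omega)
    (fun x => by dsimp only; omega)
    (by rintro ⟨a, b⟩ h; dsimp only at h; exact ⟨(a / 2 + b / 4, b / 4), by ext <;> dsimp only <;> omega⟩)
    _ (hs_of s1 (fun x => by
      unfold f6; dsimp only
      rw [X_even (by omega), X_even (by omega), X_even (by omega)]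
      congr 2; push_cast; ring) rfl)
  have L2 := leaf (f6 τ) (fun p => p.1 % 2 = 0 ∧ p.2 % 4 = 2)
    (fun x => (2 * (x.1 - x.2), 4 * x.2 + 2))
    (by rintro ⟨a, b⟩ ⟨c, d⟩ h; simp only [Prod.mk.injEq] at h ⊢; omega)
    (fun x => by dsimp only; omega)
    (by rintro ⟨a, b⟩ h; dsimp only at h; exact ⟨(a / 2 + b / 4, b / 4), by ext <;> dsimp only <;> omega⟩)
    _ (hs_of s2 (fun x => by
      unfold f6; dsimp only
      rw [X_even (by omega), X_even (by omega), X_even (by omega)]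
      congr 2; push_cast; ring) rfl)
  have L3 := leaf (f6 τ) (fun p => p.1 % 2 = 0 ∧ p.2 % 4 = 1)
    (fun x => (2 * (x.1 - x.2), 4 * x.2 + 1))
    (by rintro ⟨a, b⟩ ⟨c, d⟩ h; simp only [Prod.mk.injEq] at h ⊢; omega)
    (fun x => by dsimp only; omega)
    (by rintro ⟨a, b⟩ h; dsimp only at h; exact ⟨(a / 2 + b / 4, b / 4), by ext <;> dsimp only <;> omega⟩)
    _ (hs_of s3 (fun x => by
      unfold f6; dsimp only
      rw [X_even (a := 2 * _) (by omega), X_odd (by omega), X_odd (by omega)]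
      congr 2; push_cast; ring) rfl)
  have L4 := leaf (f6 τ) (fun p => p.1 % 2 = 0 ∧ p.2 % 4 = 3)
    (fun x => (-(2 * (x.1 - x.2)), -(4 * x.2 + 1)))
    (by rintro ⟨a, b⟩ ⟨c, d⟩ h; simp only [Prod.mk.injEq] at h ⊢; omega)
    (fun x => by dsimp only; omega)
    (by rintro ⟨a, b⟩ h; dsimp only at h; exact ⟨((-a) / 2 + (-b) / 4, (-b) / 4), by ext <;> dsimp only <;> omega⟩)
    _ (hs_of s3 (fun x => by
      unfold f6; dsimp only
      rw [X_even (a := -(2 * _)) (by omega), X_odd (by omega), X_odd (by omega)]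
      congr 2; push_cast; ring) rfl)
  have L5 := leaf (f6 τ) (fun p => p.1 % 2 = 1 ∧ p.2 % 4 = 3)
    (fun x => (2 * x.1 + 2 * x.2 + 1, -(4 * x.2 + 1)))
    (by rintro ⟨a, b⟩ ⟨c, d⟩ h; simp only [Prod.mk.injEq] at h ⊢; omega)
    (fun x => by dsimp only; omega)
    (by rintro ⟨a, b⟩ h; dsimp only at h; exact ⟨(a / 2 - (-b) / 4, (-b) / 4), by ext <;> dsimp only <;> omega⟩)
    _ (hs_of s3 (fun x => by
      unfold f6; dsimp only
      rw [X_odd (a := 2 * _ + 2 * _ + 1) (by omega), X_odd (by omega), X_even (by omega)]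
      rw [show ∀ a b : ℂ, a * a * b = b * a * a by intros; ring]
      congr 2; push_cast; ring) rfl)
  have L6 := leaf (f6 τ) (fun p => p.1 % 2 = 1 ∧ p.2 % 4 = 1)
    (fun x => (-(2 * x.1 + 2 * x.2 + 1), 4 * x.2 + 1))
    (by rintro ⟨a, b⟩ ⟨c, d⟩ h; simp only [Prod.mk.injEq] at h ⊢; omega)
    (fun x => by dsimp only; omega)
    (by rintro ⟨a, b⟩ h; dsimp only at h; exact ⟨((-a) / 2 - b / 4, b / 4), by ext <;> dsimp only <;> omega⟩)
    _ (hs_of s3 (fun x => by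
      unfold f6; dsimp only
      rw [X_odd (a := -(2 * _ + 2 * _ + 1)) (by omega), X_odd (by omega), X_even (by omega)]
      rw [show ∀ a b : ℂ, a * a * b = b * a * a by intros; ring]
      congr 2; push_cast; ring) rfl)
  have L7 := leaf (f6 τ) (fun p => p.2 % 2 = 0 ∧ p.1 % 4 = 1)
    (fun x => (4 * x.2 + 1, 2 * (x.1 - x.2)))
    (by rintro ⟨a, b⟩ ⟨c, d⟩ h; simp only [Prod.mk.injEq] at h ⊢; omega)
    (fun x => by dsimp only; omega)
    (by rintro ⟨b, a⟩ h; dsimp only at h; exact ⟨(a / 2 + b / 4, b / 4), by ext <;> dsimp only <;> omega⟩)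
    _ (hs_of s3 (fun x => by
      unfold f6; dsimp only
      rw [X_even (a := 2 * _) (by omega), X_odd (by omega), X_odd (by omega)]
      rw [show ∀ a b : ℂ, a * b * a = b * a * a by intros; ring]
      congr 2; push_cast; ring) rfl)
  have L8 := leaf (f6 τ) (fun p => p.2 % 2 = 0 ∧ p.1 % 4 = 3)
    (fun x => (-(4 * x.2 + 1), -(2 * (x.1 - x.2))))
    (by rintro ⟨a, b⟩ ⟨c, d⟩ h; simp only [Prod.mk.injEq] at h ⊢; omega)
    (fun x => by dsimp only; omega)
    (by rintro ⟨b, a⟩ h; dsimp only at h; exact ⟨((-a) / 2 + (-b) / 4, (-b) / 4), by ext <;> dsimp only <;> omega⟩)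
    _ (hs_of s3 (fun x => by
      unfold f6; dsimp only
      rw [X_even (a := -(2 * _)) (by omega), X_odd (by omega), X_odd (by omega)]
      rw [show ∀ a b : ℂ, a * b * a = b * a * a by intros; ring]
      congr 2; push_cast; ring) rfl)
  refine hs_of (((((((L1.add L2).add L3).add L4).add L5).add L6).add L7).add L8) (fun p => ?_) (by ring)
  obtain ⟨a, b⟩ := p
  dsimp only
  have ha : a % 4 = 0 ∨ a % 4 = 1 ∨ a % 4 = 2 ∨ a % 4 = 3 := by omega
  have hb : b % 4 = 0 ∨ b % 4 = 1 ∨ b % 4 = 2 ∨ b % 4 = 3 := by omega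
  rcases ha with ha | ha | ha | ha <;> rcases hb with hb | hb | hb | hb <;>
    (have ha2 : a % 2 = (a % 4) % 2 := by omega
     have hb2 : b % 2 = (b % 4) % 2 := by omega
     rw [ha] at ha2
     rw [hb] at hb2
     simp [ha, hb, ha2, hb2])

lemma W_eq (τ : ℂ) (p : ℤ × ℤ) : W τ p.1 * W τ p.2 * W τ (-p.1 - p.2) = f6 τ p := by
  have hX : X τ (-p.1 - p.2) = X τ (p.1 + p.2) := by
    unfold X
    simp only [show ((-p.1 - p.2) % 2 = 0 ↔ (p.1 + p.2) % 2 = 0) by omega]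
  have hW : ∀ a, W τ a = cexp (2 * (Real.pi : ℂ) * I * τ * ((a : ℂ) ^ 2 / 4 + a / 2)) * X τ a :=
    fun _ => rfl
  rw [hW, hW, hW, hX, f6]
  rw [show ∀ a b c d e f : ℂ, (a * b) * (c * d) * (e * f) = (a * c * e) * (b * d * f) by intros; ring,
    ← Complex.exp_add, ← Complex.exp_add]
  congr 2; push_cast; ring

end CPhiAux

/-- Formula for `CΦ₆(q)`, the constant term in `ζ` of `(-ζq;q)_∞⁶(-ζ⁻¹;q)_∞⁶`,
computed as `∫_0^1` over `ζ = e^{2πit}`, with `η(τ) = q^{1/24}(q;q)_∞`. -/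
theorem CPhi6_formula (τ : ℂ) (hτ : 0 < τ.im)
    (q : ℂ) (hq : q = Complex.exp (2 * (Real.pi : ℂ) * I * τ)) :
    (∫ t in (0:ℝ)..1,
        qPoch (-(Complex.exp (2 * (Real.pi : ℂ) * I * t)) * q) q ^ 6 *
          qPoch (-(Complex.exp (2 * (Real.pi : ℂ) * I * t))⁻¹) q ^ 6) =
      Complex.exp (2 * (Real.pi : ℂ) * I * τ * (1/4)) /
          (Complex.exp (2 * (Real.pi : ℂ) * I * τ * (1/24)) * qPoch q q) ^ 6 *
        (6 * thetaC 1 1 τ ^ 2 * thetaC 1 0 τ * thetaC 2 1 (3 * τ) * thetaC 2 1 τ +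
          thetaC 1 0 τ ^ 3 *
            (thetaC 1 1 (6 * τ) * thetaC 1 1 (2 * τ) + thetaC 1 0 (6 * τ) * thetaC 1 0 (2 * τ))) := by
  have hq1 : ‖q‖ < 1 := hq ▸ CPhiAux.norm_q_lt hτ
  have hne := CPhiAux.qPoch_ne hq1
  have hct := CPhiAux.ct (CPhiAux.summable_W hτ) (fun t : ℝ => (∑' k, CPhiAux.T t τ k) ^ 2)
    (fun t => CPhiAux.theta_sq hτ t) _
    (CPhiAux.hs_of (CPhiAux.lattice hτ) (fun p => CPhiAux.W_eq τ p) rfl)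
  rw [← hct, ← intervalIntegral.integral_const_mul]
  congr 1
  funext t
  rw [← mul_pow, CPhiAux.jtp hτ t q _ hq rfl]
  have h4 : cexp (2 * (Real.pi : ℂ) * I * τ * (1/4)) =
      cexp (2 * (Real.pi : ℂ) * I * τ * (1/24)) ^ 6 := by
    rw [← Complex.exp_nat_mul]; congr 1; push_cast; ring
  rw [h4]
  have h5 := Complex.exp_ne_zero (2 * (Real.pi : ℂ) * I * τ * (1/24))
  field_simp
end
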